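/- (Theorem 6.8(i), half-turn symmetry in dimension 4.) Let G be a finite simple graph with |E| = 4|V| − 10, let C ∈ O(4) be a half-turn (an orthogonal involution of ℝ⁴ whose fixed subspace is 2-dimensional), S = {I, C}, and let Φ : S → Aut(G) be a homomorphism such that Φ(C) fixes no edge setwise (b_C = 0). Let (G,p) be an S-symmetric framework of type Φ in ℝ⁴ whose points p_i affinely span ℝ⁴ and which admits no nonzero fully (S,Φ)-symmetric self-stress (this last hypothesis playing the role of the paper's '(S,Φ)-generic' assumption, as licensed by Remark 6.2). Then (G,p) has a finite flex preserving the symmetry throughout the path. -/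

import Mathlib

open scoped Classical

noncomputable section

abbrev Euc (d : ℕ) : Type := EuclideanSpace ℝ (Fin d)

/-- The subspace of points of `ℝ^d` fixed by a linear isometry (orthogonal transformation). -/
def fixedSpace {d : ℕ} (x : Euc d ≃ₗᵢ[ℝ] Euc d) : Submodule ℝ (Euc d) :=
  LinearMap.ker (x.toLinearEquiv.toLinearMap - LinearMap.id)

/-!
The squared edge lengths of symmetric configurations form a quadratic map between the space of
symmetric configurations and the space of symmetric edge functions. Its derivative at `p` is, up to
a factor, the symmetric part of the rigidity map; by averaging over the symmetry, its cokernel is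
dual to the symmetric self-stresses, so it is onto and the implicit function theorem turns every
symmetric infinitesimal motion into a path of symmetric frameworks with the same edge lengths. The
dimensions of the two spaces are traces of projections onto fixed spaces of involutions, and the
symmetric infinitesimal isometries are block diagonal, so for a half-turn of `ℝ⁴` they have
dimension at most `1 + 1 + 2 = 4`. Since `2 |V| - |E| / 2 = 5`, some symmetric infinitesimal motion
changes a distance to first order.
-/

open Filter Topology Module

section FiberPath

variable {M N : Type*} [NormedAddCommGroup M] [NormedSpace ℝ M]
  [NormedAddCommGroup N] [NormedSpace ℝ N]

theorem exists_hasDerivAt_fiber_curve [CompleteSpace M] [FiniteDimensional ℝ N]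
    {f : M → N} {f' : M →L[ℝ] N} {a u : M} (hf : HasStrictFDerivAt f f' a) (hf' : f'.range = ⊤)
    (hu : f' u = 0) :
    ∃ γ : ℝ → M, γ 0 = a ∧ HasDerivAt γ u 0 ∧
      ∀ᶠ t in 𝓝 0, ContinuousAt γ t ∧ f (γ t) = f a := by
  let φ := hf.implicitFunction f f' hf' (f a)
  let w : f'.ker := ⟨u, hu⟩
  have hw : HasStrictDerivAt (fun t : ℝ => t • w) w 0 := by
    simpa using (hasStrictDerivAt_id (0 : ℝ)).smul_const w
  have hφ : HasStrictFDerivAt φ f'.ker.subtypeL ((0 : ℝ) • w) := by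
    simpa using hf.to_implicitFunction hf'
  have hγ : HasStrictDerivAt (fun t : ℝ => φ (t • w)) u 0 := by
    simpa [w, Function.comp_def] using hφ.comp_hasStrictDerivAt (0 : ℝ) hw
  refine ⟨fun t => φ (t • w), by simp [φ], hγ.hasDerivAt, .and ?_ ?_⟩
  · obtain ⟨K, s, hs, hK⟩ := hγ.hasStrictFDerivAt.exists_lipschitzOnWith
    exact (eventually_mem_nhds_iff.2 hs).mono fun t ht => hK.continuousOn.continuousAt ht
  · have hline : Tendsto (fun t : ℝ => (f a, t • w)) (𝓝 0) (𝓝 (f a, 0)) := by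
      have : Continuous fun t : ℝ => (f a, t • w) := by fun_prop
      simpa using this.tendsto 0
    exact hline.eventually (hf.map_implicitFunction_eq hf')

theorem exists_fiber_path [CompleteSpace M] [FiniteDimensional ℝ N] {f : M → N} {f' : M →L[ℝ] N}
    {g : M → ℝ} {g' : M →L[ℝ] ℝ} {a u : M} (hf : HasStrictFDerivAt f f' a) (hf' : f'.range = ⊤)
    (hg : HasFDerivAt g g' a) (hu : f' u = 0) (hgu : g' u ≠ 0) :
    ∃ γ : ℝ → M, ContinuousOn γ (Set.Icc 0 1) ∧ γ 0 = a ∧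
      (∀ t ∈ Set.Icc (0 : ℝ) 1, f (γ t) = f a) ∧ ∀ t ∈ Set.Ioc (0 : ℝ) 1, g (γ t) ≠ g a := by
  obtain ⟨γ, rfl, hγ, hfiber⟩ := exists_hasDerivAt_fiber_curve hf hf' hu
  have hne : ∀ᶠ t in 𝓝[≠] 0, g (γ t) ≠ g (γ 0) :=
    (hg.comp_hasDerivAt 0 hγ).eventually_ne hgu
  obtain ⟨ε, hε, hball⟩ :=
    Metric.eventually_nhds_iff.1 (hfiber.and (eventually_nhdsWithin_iff.1 hne))
  have hscale : ∀ t ∈ Set.Icc (0 : ℝ) 1, dist (t * (ε / 2)) 0 < ε := fun t ht => by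
    rw [Real.dist_0_eq_abs, abs_of_nonneg (mul_nonneg ht.1 (by positivity))]
    nlinarith [ht.2]
  refine ⟨fun t => γ (t * (ε / 2)), fun t ht => ?_, by simp, fun t ht => ?_, fun t ht => ?_⟩
  · exact ((hball (hscale t ht)).1.1.comp (f := fun t => t * (ε / 2))
      (by fun_prop)).continuousWithinAt
  · exact (hball (hscale t ht)).1.2
  · exact (hball (hscale t (Set.Ioc_subset_Icc_self ht))).2 (mul_pos ht.1 (half_pos hε)).ne'

theorem hasStrictFDerivAt_bilin_self [FiniteDimensional ℝ M] (B : M →ₗ[ℝ] M →ₗ[ℝ] N)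
    (hB : ∀ x y, B x y = B y x) (a : M) :
    HasStrictFDerivAt (fun x => B x x) ((2 : ℝ) • (B a).toContinuousLinearMap) a := by
  have hdiag := (hasStrictFDerivAt_id (𝕜 := ℝ) a).prodMk (hasStrictFDerivAt_id a)
  have hB' := B.toContinuousBilinearMap.isBoundedBilinearMap.hasStrictFDerivAt (a, a)
  refine (hB'.comp (f := fun x => (x, x)) a hdiag).congr_fderiv ?_
  ext x
  simp [hB x a, two_smul]

theorem exists_bilin_self_fiber_path [FiniteDimensional ℝ M] [FiniteDimensional ℝ N]
    (B : M →ₗ[ℝ] M →ₗ[ℝ] N) (hB : ∀ x y, B x y = B y x)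
    (b : M →ₗ[ℝ] M →ₗ[ℝ] ℝ) (hb : ∀ x y, b x y = b y x) {a u : M}
    (hsurj : LinearMap.range (B a) = ⊤) (hu : B a u = 0) (hbu : b a u ≠ 0) :
    ∃ γ : ℝ → M, ContinuousOn γ (Set.Icc 0 1) ∧ γ 0 = a ∧
      (∀ t ∈ Set.Icc (0 : ℝ) 1, B (γ t) (γ t) = B a a) ∧
      ∀ t ∈ Set.Ioc (0 : ℝ) 1, b (γ t) (γ t) ≠ b a a := by
  have : CompleteSpace M := FiniteDimensional.complete ℝ M
  refine exists_fiber_path (hasStrictFDerivAt_bilin_self B hB a) ?_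
    (hasStrictFDerivAt_bilin_self b hb a).hasFDerivAt (u := u) (by simp [hu]) (by simp [hbu])
  exact (LinearMap.range_smul (B a) (2 : ℝ) two_ne_zero).trans hsurj

end FiberPath

section SymmetricConfiguration

variable {K M : Type*} [Field K] [AddCommGroup M] [Module K M]

theorem two_mul_finrank_fixedSubmodule [NeZero (2 : K)] [FiniteDimensional K M] {T : M →ₗ[K] M}
    (hT : Function.Involutive T) :
    (2 * finrank K T.fixedSubmodule : K) = finrank K M + LinearMap.trace K M T := by
  have hproj : LinearMap.IsProj T.fixedSubmodule ((2 : K)⁻¹ • (LinearMap.id + T)) := by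
    refine ⟨fun x => ?_, fun x hx => ?_⟩
    · simp [hT x, add_comm]
    · rw [LinearMap.mem_fixedSubmodule_iff] at hx
      simp [hx, ← two_smul K, smul_smul, NeZero.ne]
  rw [← hproj.trace, map_smul, map_add, LinearMap.trace_id, smul_eq_mul,
    mul_inv_cancel_left₀ two_ne_zero]

variable {X : Type*}

/-- The configurations `q` of points of `M`, indexed by `X`, that are symmetric under the pair
`(C, π)`: applying `C` to the points has the same effect as permuting their labels by `π`. -/
def symmetricConfigurations (C : M →ₗ[K] M) (π : X → X) : Submodule K (X → M) :=
  LinearMap.eqLocus (C.compLeft X) (LinearMap.funLeft K M π)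

theorem mem_symmetricConfigurations {C : M →ₗ[K] M} {π : X → X} {q : X → M} :
    q ∈ symmetricConfigurations C π ↔ ∀ i, C (q i) = q (π i) :=
  funext_iff

theorem trace_funLeft_comp_compLeft [FiniteDimensional K M] [Finite X] (C : M →ₗ[K] M)
    (π : X → X) :
    LinearMap.trace K (X → M) (LinearMap.funLeft K M π ∘ₗ C.compLeft X) =
      (Function.fixedPoints π).ncard * LinearMap.trace K M C := by
  cases nonempty_fintype X
  let b := finBasis K M
  rw [LinearMap.trace_eq_matrix_trace K (Pi.basis fun _ : X => b),
    LinearMap.trace_eq_matrix_trace K b, Matrix.trace, Fintype.sum_sigma]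
  have hblock (i : X) : ∑ k, LinearMap.toMatrix (Pi.basis fun _ : X => b) (Pi.basis fun _ => b)
      (LinearMap.funLeft K M π ∘ₗ C.compLeft X) ⟨i, k⟩ ⟨i, k⟩ =
      if π i = i then (LinearMap.toMatrix b b C).trace else 0 := by
    simp only [LinearMap.toMatrix_apply, Pi.basis_apply, Pi.basis_repr, Matrix.trace,
      Matrix.diag_apply]
    split_ifs with h <;> simp [LinearMap.funLeft, h]
  simp only [Matrix.diag_apply, hblock]
  rw [← Finset.sum_filter, Finset.sum_const, nsmul_eq_mul, Set.ncard_eq_toFinset_card']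
  congr 3
  ext; simp [Function.IsFixedPt]

theorem two_mul_finrank_symmetricConfigurations [NeZero (2 : K)] [FiniteDimensional K M]
    [Fintype X] {C : M →ₗ[K] M} (hC : Function.Involutive C) {π : X → X}
    (hπ : Function.Involutive π) :
    (2 * finrank K (symmetricConfigurations C π) : K) =
      finrank K M * Fintype.card X + (Function.fixedPoints π).ncard * LinearMap.trace K M C := by
  let T : (X → M) →ₗ[K] (X → M) := LinearMap.funLeft K M π ∘ₗ C.compLeft X
  have hT : Function.Involutive T := fun q => by
    ext i; simp [T, LinearMap.funLeft, hπ i, hC (q i)]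
  have hfixed : symmetricConfigurations C π = T.fixedSubmodule := by
    ext q
    rw [mem_symmetricConfigurations, LinearMap.mem_fixedSubmodule_iff, funext_iff]
    exact ⟨fun h i => (h (π i)).trans (congrArg q (hπ i)), fun h i =>
      (congrArg C (h i)).symm.trans (hC _)⟩
  rw [hfixed, two_mul_finrank_fixedSubmodule hT, trace_funLeft_comp_compLeft, finrank_pi_fintype]
  simp [mul_comm]

end SymmetricConfiguration

section InfinitesimalIsometry

open scoped RealInnerProductSpace

variable {E : Type*} [NormedAddCommGroup E] [InnerProductSpace ℝ E]

theorem trace_eq_finrank_sub_of_involutive [FiniteDimensional ℝ E] {C : End ℝ E}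
    (hC : Function.Involutive C) :
    LinearMap.trace ℝ E C = finrank ℝ C.fixedSubmodule - finrank ℝ C.fixedSubmoduleᗮ := by
  have hfixed := two_mul_finrank_fixedSubmodule hC
  have hcompl : (finrank ℝ C.fixedSubmodule + finrank ℝ C.fixedSubmoduleᗮ : ℝ) = finrank ℝ E :=
    mod_cast C.fixedSubmodule.finrank_add_finrank_orthogonal
  linarith

theorem mem_skewAdjointSubmodule_innerₗ {A : End ℝ E} :
    A ∈ (innerₗ E).skewAdjointSubmodule ↔ ∀ x y, ⟪A x, y⟫ = -⟪x, A y⟫ := by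
  simp [LinearMap.mem_skewAdjointSubmodule, LinearMap.IsSkewAdjoint, LinearMap.IsAdjointPair]

theorem eq_zero_of_mem_skewAdjointSubmodule {ι : Type*} [Fintype ι] [LinearOrder ι]
    (b : OrthonormalBasis ι ℝ E) {A : End ℝ E} (hA : A ∈ (innerₗ E).skewAdjointSubmodule)
    (hupper : ∀ i j, i < j → ⟪A (b i), b j⟫ = 0) : A = 0 := by
  rw [mem_skewAdjointSubmodule_innerₗ] at hA
  have hswap (i j : ι) : ⟪A (b i), b j⟫ = -⟪A (b j), b i⟫ := by rw [hA, real_inner_comm]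
  refine b.toBasis.ext fun i => InnerProductSpace.ext_inner_right_basis b.toBasis fun j => ?_
  simp only [OrthonormalBasis.coe_toBasis, LinearMap.zero_apply, inner_zero_left]
  rcases lt_trichotomy i j with hij | rfl | hji
  · exact hupper i j hij
  · linarith [hswap i i]
  · rw [hswap, hupper j i hji, neg_zero]

theorem finrank_skewAdjointSubmodule_le [FiniteDimensional ℝ E] :
    finrank ℝ (innerₗ E).skewAdjointSubmodule ≤ (finrank ℝ E).choose 2 := by
  let b := stdOrthonormalBasis ℝ E
  let upper : (innerₗ E).skewAdjointSubmodule →ₗ[ℝ]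
      ({x : Fin (finrank ℝ E) × Fin (finrank ℝ E) // x.1 < x.2} → ℝ) :=
    LinearMap.pi (fun x => ((innerₗ E).flip (b x.1.2)) ∘ₗ LinearMap.applyₗ (b x.1.1)) ∘ₗ
      Submodule.subtype _
  have hinj : Function.Injective upper := by
    refine (injective_iff_map_eq_zero upper).2 fun A hA => Subtype.ext ?_
    exact eq_zero_of_mem_skewAdjointSubmodule b A.2 fun i j hij => congrFun hA ⟨(i, j), hij⟩
  refine (LinearMap.finrank_le_finrank_of_injective hinj).trans_eq ?_
  rw [finrank_fintype_fun_eq_card, Fintype.card_subtype, Fintype.card_product_filter_lt,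
    Fintype.card_fin]

/-- The compression `P_W ∘ A|_W` of an operator `A` to the subspace `W`, as a linear function
of `A`. -/
def compression (W : Submodule ℝ E) [W.HasOrthogonalProjection] : End ℝ E →ₗ[ℝ] End ℝ W :=
  LinearMap.lcomp ℝ W W.subtype ∘ₗ LinearMap.compRight ℝ W.orthogonalProjectionOnto.toLinearMap

theorem compression_apply (W : Submodule ℝ E) [W.HasOrthogonalProjection] (A : End ℝ E) (x : W) :
    compression W A x = W.orthogonalProjectionOnto (A x) := rfl

theorem coe_compression_apply_of_mapsTo {W : Submodule ℝ E} [W.HasOrthogonalProjection]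
    {A : End ℝ E} (hA : Set.MapsTo A W W) (x : W) : (compression W A x : E) = A x := by
  rw [compression_apply]
  exact Submodule.starProjection_eq_self_iff.2 (hA x.2)

theorem compression_mem_skewAdjointSubmodule (W : Submodule ℝ E) [W.HasOrthogonalProjection]
    {A : End ℝ E} (hA : A ∈ (innerₗ E).skewAdjointSubmodule) :
    compression W A ∈ (innerₗ W).skewAdjointSubmodule := by
  rw [mem_skewAdjointSubmodule_innerₗ] at hA ⊢
  intro x y
  rw [compression_apply, compression_apply,
    Submodule.inner_orthogonalProjectionOnto_eq_of_mem_right,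
    Submodule.inner_orthogonalProjectionOnto_eq_of_mem_left, hA]

theorem mapsTo_orthogonal_of_mem_skewAdjointSubmodule {W : Submodule ℝ E} {A : End ℝ E}
    (hA : A ∈ (innerₗ E).skewAdjointSubmodule) (hW : Set.MapsTo A W W) :
    Set.MapsTo A Wᗮ Wᗮ := fun x hx => by
  rw [mem_skewAdjointSubmodule_innerₗ] at hA
  refine (Submodule.mem_orthogonal' W _).2 fun y hy => ?_
  rw [hA, (Submodule.mem_orthogonal' W x).1 hx _ (hW hy), neg_zero]

theorem eq_zero_of_compression_eq_zero {W : Submodule ℝ E} [W.HasOrthogonalProjection]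
    {A : End ℝ E} (hA : Set.MapsTo A W W) (hA' : Set.MapsTo A Wᗮ Wᗮ) (hW : compression W A = 0)
    (hW' : compression Wᗮ A = 0) : A = 0 := by
  ext x
  obtain ⟨y, hy, z, hz, rfl⟩ := W.exists_add_mem_mem_orthogonal x
  have hAy := coe_compression_apply_of_mapsTo hA ⟨y, hy⟩
  have hAz := coe_compression_apply_of_mapsTo hA' ⟨z, hz⟩
  simp only [hW, hW', LinearMap.zero_apply, ZeroMemClass.coe_zero] at hAy hAz
  simp [← hAy, ← hAz]

/-- The skew-adjoint operators commuting with `C`: the linear parts of the infinitesimal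
isometries that are symmetric under `C`. -/
def skewAdjointCommutant (C : End ℝ E) : Submodule ℝ (End ℝ E) :=
  (innerₗ E).skewAdjointSubmodule ⊓ (Subalgebra.centralizer ℝ {C}).toSubmodule

theorem mem_skewAdjointCommutant {C A : End ℝ E} :
    A ∈ skewAdjointCommutant C ↔ A ∈ (innerₗ E).skewAdjointSubmodule ∧ ∀ x, C (A x) = A (C x) := by
  rw [skewAdjointCommutant, Submodule.mem_inf, Subalgebra.mem_toSubmodule,
    Subalgebra.mem_centralizer_iff]
  simp only [Set.mem_singleton_iff, forall_eq]
  rw [LinearMap.ext_iff]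
  rfl

theorem mapsTo_fixedSubmodule_of_mem_skewAdjointCommutant {C A : End ℝ E}
    (hA : A ∈ skewAdjointCommutant C) : Set.MapsTo A C.fixedSubmodule C.fixedSubmodule :=
  fun x hx => by
    rw [SetLike.mem_coe, LinearMap.mem_fixedSubmodule_iff] at hx ⊢
    rw [(mem_skewAdjointCommutant.1 hA).2, hx]

theorem finrank_skewAdjointCommutant_le [FiniteDimensional ℝ E] (C : End ℝ E) :
    finrank ℝ (skewAdjointCommutant C) ≤
      (finrank ℝ C.fixedSubmodule).choose 2 + (finrank ℝ C.fixedSubmoduleᗮ).choose 2 := by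
  let F := C.fixedSubmodule
  let block (W : Submodule ℝ E) : skewAdjointCommutant C →ₗ[ℝ] (innerₗ W).skewAdjointSubmodule :=
    (compression W).restrict fun A hA => compression_mem_skewAdjointSubmodule W hA.1
  have hinj : Function.Injective ((block F).prod (block Fᗮ)) := by
    refine (injective_iff_map_eq_zero _).2 fun A hA => Subtype.ext ?_
    obtain ⟨hF, hF'⟩ := Prod.mk_eq_zero.1 hA
    have hAF := mapsTo_fixedSubmodule_of_mem_skewAdjointCommutant A.2
    exact eq_zero_of_compression_eq_zero hAF
      (mapsTo_orthogonal_of_mem_skewAdjointSubmodule A.2.1 hAF)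
      (congrArg Subtype.val hF) (congrArg Subtype.val hF')
  calc finrank ℝ (skewAdjointCommutant C)
      ≤ finrank ℝ ((innerₗ F).skewAdjointSubmodule × (innerₗ Fᗮ).skewAdjointSubmodule) :=
        LinearMap.finrank_le_finrank_of_injective hinj
    _ = finrank ℝ (innerₗ F).skewAdjointSubmodule + finrank ℝ (innerₗ Fᗮ).skewAdjointSubmodule :=
        finrank_prod
    _ ≤ _ := add_le_add finrank_skewAdjointSubmodule_le finrank_skewAdjointSubmodule_le

variable {V : Type*} {p u : V → E}

theorem exists_skewAdjoint_comp_eq {X : Type*} [AddCommGroup X] [Module ℝ X] {L M : X →ₗ[ℝ] E}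
    (hL : Function.Surjective L) (hLM : ∀ c d, ⟪M c, L d⟫ = -⟪L c, M d⟫) :
    ∃ A ∈ (innerₗ E).skewAdjointSubmodule, A ∘ₗ L = M := by
  have hker : LinearMap.ker L ≤ LinearMap.ker M := fun c hc => by
    refine ext_inner_right ℝ fun x => ?_
    obtain ⟨d, rfl⟩ := hL x
    rw [hLM, LinearMap.mem_ker.1 hc, inner_zero_left, inner_zero_left, neg_zero]
  let A : End ℝ E := (LinearMap.ker L).liftQ M hker ∘ₗ (L.quotKerEquivOfSurjective hL).symm
  have hAL (c : X) : A (L c) = M c := by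
    have : (L.quotKerEquivOfSurjective hL).symm (L c) = (LinearMap.ker L).mkQ c :=
      (LinearEquiv.symm_apply_eq _).2 rfl
    simp [A, this]
  refine ⟨A, mem_skewAdjointSubmodule_innerₗ.2 fun x y => ?_, LinearMap.ext hAL⟩
  obtain ⟨c, rfl⟩ := hL x
  obtain ⟨d, rfl⟩ := hL y
  rw [hAL, hAL, hLM]

theorem exists_infinitesimal_isometry_of_inner_eq_zero
    (hspan : affineSpan ℝ (Set.range p) = ⊤) (hu : ∀ k l, ⟪p k - p l, u k - u l⟫ = 0) :
    ∃ A ∈ (innerₗ E).skewAdjointSubmodule, ∃ b, ∀ i, u i = A (p i) + b := by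
  obtain ⟨i₀⟩ : Nonempty V := by
    rw [← Set.range_nonempty_iff_nonempty (f := p), ← affineSpan_nonempty ℝ, hspan]
    exact Set.univ_nonempty
  let q : V → E := fun i => p i - p i₀
  let w : V → E := fun i => u i - u i₀
  have hqw (k l : V) : ⟪w k, q l⟫ = -⟪q k, w l⟫ := by
    have hkl := hu k l
    have hk : ⟪q k, w k⟫ = 0 := hu k i₀
    have hl : ⟪q l, w l⟫ = 0 := hu l i₀
    rw [← sub_sub_sub_cancel_right _ _ (p i₀), ← sub_sub_sub_cancel_right _ _ (u i₀)] at hkl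
    simp only [q, w, inner_sub_left, inner_sub_right, real_inner_comm] at *
    linarith
  have hsurj : Function.Surjective (Finsupp.linearCombination ℝ q) := by
    rw [← LinearMap.range_eq_top, Finsupp.range_linearCombination]
    have := AffineSubspace.vectorSpan_eq_top_of_affineSpan_eq_top ℝ E E hspan
    rwa [vectorSpan_range_eq_span_range_vsub_right ℝ p i₀] at this
  obtain ⟨A, hA, hAq⟩ := exists_skewAdjoint_comp_eq (M := Finsupp.linearCombination ℝ w) hsurj
    fun c d => by
      simp [Finsupp.linearCombination_apply, Finsupp.sum, sum_inner, inner_sum,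
        real_inner_smul_left, real_inner_smul_right, hqw]
  refine ⟨A, hA, u i₀ - A (p i₀), fun i => ?_⟩
  have hAi : A (q i) = w i := by
    simpa using LinearMap.congr_fun hAq (Finsupp.single i 1)
  simp only [q, w, map_sub] at hAi
  rw [eq_add_of_sub_eq hAi.symm]
  abel

/-- The infinitesimal motions `i ↦ A (p i) + b` of the configuration `p` induced by the
infinitesimal isometries `x ↦ A x + b` of `E` that are symmetric under `C`. -/
def symmetricTrivialMotions (C : End ℝ E) (p : V → E) : Submodule ℝ (V → E) :=
  LinearMap.range <| LinearMap.pi fun i =>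
    (LinearMap.applyₗ (p i) ∘ₗ (skewAdjointCommutant C).subtype).coprod C.fixedSubmodule.subtype

theorem mem_symmetricTrivialMotions {C : End ℝ E} {p u : V → E} :
    u ∈ symmetricTrivialMotions C p ↔
      ∃ A ∈ skewAdjointCommutant C, ∃ b ∈ C.fixedSubmodule, ∀ i, A (p i) + b = u i := by
  simp [symmetricTrivialMotions, funext_iff]

theorem finrank_symmetricTrivialMotions_le [FiniteDimensional ℝ E] (C : End ℝ E) (p : V → E) :
    finrank ℝ (symmetricTrivialMotions C p) ≤ (finrank ℝ C.fixedSubmodule).choose 2 +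
      (finrank ℝ C.fixedSubmoduleᗮ).choose 2 + finrank ℝ C.fixedSubmodule := by
  refine (LinearMap.finrank_range_le _).trans ?_
  rw [finrank_prod]
  exact Nat.add_le_add_right (finrank_skewAdjointCommutant_le C) _

theorem mem_symmetricTrivialMotions_of_inner_eq_zero {C : End ℝ E} {σ : V → V}
    (hp : p ∈ symmetricConfigurations C σ) (hspan : affineSpan ℝ (Set.range p) = ⊤)
    (hu : u ∈ symmetricConfigurations C σ) (hinner : ∀ k l, ⟪p k - p l, u k - u l⟫ = 0) :
    u ∈ symmetricTrivialMotions C p := by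
  rw [mem_symmetricConfigurations] at hp hu
  obtain ⟨A, hA, b, hAb⟩ := exists_infinitesimal_isometry_of_inner_eq_zero hspan hinner
  let ξ : E →ᵃ[ℝ] E := A.toAffineMap + AffineMap.const ℝ E b
  have hξ : C.toAffineMap.comp ξ = ξ.comp C.toAffineMap := by
    refine AffineMap.ext_on hspan ?_
    rintro _ ⟨i, rfl⟩
    simpa [ξ, hp, ← hAb] using hu i
  have hCξ (x : E) : C (A x + b) = A (C x) + b := by simpa [ξ] using DFunLike.congr_fun hξ x
  have hCb : C b = b := by simpa using hCξ 0
  refine mem_symmetricTrivialMotions.2 ⟨A, mem_skewAdjointCommutant.2 ⟨hA, fun x => ?_⟩, b,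
    C.mem_fixedSubmodule_iff.2 hCb, fun i => (hAb i).symm⟩
  simpa [hCb] using hCξ x

end InfinitesimalIsometry

section Framework

open scoped RealInnerProductSpace

variable {V E : Type*} [NormedAddCommGroup E] [InnerProductSpace ℝ E]

/-- The bilinear form `(q, u) ↦ ⟪q i - q j, u i - u j⟫` attached to the pair `e = s(i, j)`. Its
diagonal values are squared lengths, and `edgeForm e p u = 0` is the condition that the velocity
`u` preserves the length of `e` to first order at `p`. -/
def edgeForm (e : Sym2 V) : LinearMap.BilinForm ℝ (V → E) :=
  let eval (i : V) : (V → E) →ₗ[ℝ] E := LinearMap.proj i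
  Sym2.lift ⟨fun i j => (innerₗ E).compl₁₂ (eval i - eval j) (eval i - eval j),
    fun i j => LinearMap.ext₂ fun q u => by
      change ⟪q i - q j, u i - u j⟫ = ⟪q j - q i, u j - u i⟫
      rw [← inner_neg_neg, neg_sub, neg_sub]⟩ e

@[simp]
theorem edgeForm_mk (i j : V) (q u : V → E) : edgeForm s(i, j) q u = ⟪q i - q j, u i - u j⟫ :=
  rfl

theorem edgeForm_mk_self_eq_iff (i j : V) (q p : V → E) :
    edgeForm s(i, j) q q = edgeForm s(i, j) p p ↔ ‖q i - q j‖ = ‖p i - p j‖ := by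
  simp only [edgeForm_mk, real_inner_self_eq_norm_sq]
  exact sq_eq_sq₀ (norm_nonneg _) (norm_nonneg _)

theorem edgeForm_comm (e : Sym2 V) (q u : V → E) : edgeForm e q u = edgeForm e u q := by
  induction e with | _ i j => simp [real_inner_comm]

theorem edgeForm_map (σ : V → V) (e : Sym2 V) (q u : V → E) :
    edgeForm (e.map σ) q u = edgeForm e (q ∘ σ) (u ∘ σ) := by
  induction e with | _ i j => rfl

theorem edgeForm_isometry_comp (C : E →ₗᵢ[ℝ] E) (e : Sym2 V) (q u : V → E) :
    edgeForm e (C ∘ q) (C ∘ u) = edgeForm e q u := by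
  induction e with | _ i j => simp [← map_sub]

theorem edgeForm_map_of_mem_symmetricConfigurations {C : E →ₗᵢ[ℝ] E} {σ : V → V} {q u : V → E}
    (hq : q ∈ symmetricConfigurations C.toLinearMap σ)
    (hu : u ∈ symmetricConfigurations C.toLinearMap σ) (e : Sym2 V) :
    edgeForm (e.map σ) q u = edgeForm e q u := by
  rw [edgeForm_map, ← edgeForm_isometry_comp C e q u]
  have hqσ : C ∘ q = q ∘ σ := funext (mem_symmetricConfigurations.1 hq)
  have huσ : C ∘ u = u ∘ σ := funext (mem_symmetricConfigurations.1 hu)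
  rw [hqσ, huσ]

variable {G : SimpleGraph V}

/-- The edge functions `ω` on `G` with `ω (φ e) = ω e`, inside the Euclidean space of all edge
functions. -/
def symmetricEdgeFunctions (φ : G ≃g G) : Submodule ℝ (EuclideanSpace ℝ G.edgeSet) :=
  (symmetricConfigurations LinearMap.id φ.mapEdgeSet).comap
    (WithLp.linearEquiv 2 ℝ (G.edgeSet → ℝ)).toLinearMap

theorem mem_symmetricEdgeFunctions {φ : G ≃g G} {ω : EuclideanSpace ℝ G.edgeSet} :
    ω ∈ symmetricEdgeFunctions φ ↔ ∀ e, ω e = ω (φ.mapEdgeSet e) :=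
  mem_symmetricConfigurations

theorem two_mul_finrank_symmetricEdgeFunctions [Fintype G.edgeSet] {φ : G ≃g G}
    (hφ : Function.Involutive φ) :
    2 * finrank ℝ (symmetricEdgeFunctions φ) =
      G.edgeFinset.card + {e ∈ G.edgeSet | e.map φ = e}.ncard := by
  have hmap : Function.Involutive φ.mapEdgeSet := fun e => Subtype.ext <| by
    rcases e with ⟨⟨i, j⟩, _⟩
    exact congrArg₂ (fun i j => s(i, j)) (hφ i) (hφ j)
  have hfix : (Function.fixedPoints φ.mapEdgeSet).ncard = {e ∈ G.edgeSet | e.map φ = e}.ncard := by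
    rw [← Set.ncard_image_of_injective _ Subtype.val_injective]
    congr 1
    ext e
    simp [Function.IsFixedPt, Subtype.ext_iff, and_comm]
  have hcount := two_mul_finrank_symmetricConfigurations (K := ℝ) (M := ℝ) (C := LinearMap.id)
    (fun _ => rfl) hmap
  rw [symmetricEdgeFunctions, Submodule.comap_equiv_eq_map_symm, LinearEquiv.finrank_map_eq]
  rw [hfix, finrank_self, LinearMap.trace_id, finrank_self] at hcount
  rw [G.edgeFinset_card]
  simp only [Nat.cast_one, one_mul, mul_one] at hcount
  exact_mod_cast hcount

/-- The squared-length map of a symmetric framework, polarized: `(q, u) ↦ (edgeForm e q u)_e`, for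
symmetric `q` and `u`. For fixed `q` it is the rigidity map restricted to symmetric velocities. -/
def symmetricRigidityForm (C : E →ₗᵢ[ℝ] E) (φ : G ≃g G) :
    symmetricConfigurations C.toLinearMap φ →ₗ[ℝ] symmetricConfigurations C.toLinearMap φ →ₗ[ℝ]
      symmetricEdgeFunctions φ :=
  LinearMap.mk₂ ℝ
    (fun q u => ⟨WithLp.toLp 2 fun e : G.edgeSet => edgeForm e.1 q.1 u.1,
      mem_symmetricEdgeFunctions.2 fun e =>
        (edgeForm_map_of_mem_symmetricConfigurations q.2 u.2 e.1).symm⟩)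
    (fun _ _ _ => by ext; simp) (fun _ _ _ => by ext; simp)
    (fun _ _ _ => by ext; simp) (fun _ _ _ => by ext; simp)

@[simp]
theorem symmetricRigidityForm_apply {C : E →ₗᵢ[ℝ] E} {φ : G ≃g G}
    (q u : symmetricConfigurations C.toLinearMap φ) (e : G.edgeSet) :
    (symmetricRigidityForm C φ q u).1 e = edgeForm e.1 q.1 u.1 := rfl

theorem symmetricRigidityForm_comm {C : E →ₗᵢ[ℝ] E} {φ : G ≃g G}
    (q u : symmetricConfigurations C.toLinearMap φ) :
    symmetricRigidityForm C φ q u = symmetricRigidityForm C φ u q := by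
  ext e
  exact edgeForm_comm e.1 q.1 u.1

/-- `ω` is a self-stress of the framework `(G, p)`. Only its values on the edges of `G` matter. -/
def IsSelfStress (G : SimpleGraph V) [G.LocallyFinite] (p : V → E) (ω : Sym2 V → ℝ) : Prop :=
  ∀ i, ∑ j ∈ G.neighborFinset i, ω s(i, j) • (p i - p j) = 0

theorem sum_edgeForm_single [Fintype G.edgeSet] [G.LocallyFinite] (p : V → E)
    (ω : Sym2 V → ℝ) (i : V) (x : E) :
    ∑ e : G.edgeSet, ω e * edgeForm e.1 p (Pi.single i x) =
      ⟪∑ j ∈ G.neighborFinset i, ω s(i, j) • (p i - p j), x⟫ := by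
  have hsub : (G.neighborFinset i).image (fun j => s(i, j)) ⊆ G.edgeSet.toFinset := by
    intro e he
    obtain ⟨j, hj, rfl⟩ := Finset.mem_image.1 he
    simpa using hj
  rw [Finset.sum_set_coe (f := fun e => ω e * edgeForm e p (Pi.single i x)),
    ← Finset.sum_subset hsub, Finset.sum_image fun j _ k _ => Sym2.congr_right.1, sum_inner]
  · refine Finset.sum_congr rfl fun j hj => ?_
    have hji : j ≠ i := (G.ne_of_adj (by simpa using hj)).symm
    simp [hji, real_inner_smul_left]
  · intro e he hnot
    induction e with | _ a b =>
    have ha : a ≠ i := by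
      rintro rfl
      exact hnot (Finset.mem_image.2 ⟨b, by simpa using he, rfl⟩)
    have hb : b ≠ i := by
      rintro rfl
      exact hnot (Finset.mem_image.2 ⟨a, by simpa [G.adj_comm] using he, Sym2.eq_swap⟩)
    simp [ha, hb]

theorem isSelfStress_of_sum_edgeForm_eq_zero [Fintype G.edgeSet] [G.LocallyFinite]
    {p : V → E} {ω : Sym2 V → ℝ} (hω : ∀ u, ∑ e : G.edgeSet, ω e * edgeForm e.1 p u = 0) :
    IsSelfStress G p ω := fun i => ext_inner_right ℝ fun x => by
  rw [← sum_edgeForm_single, hω, inner_zero_left]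

theorem sum_edgeForm_eq_zero_of_symmetric [Fintype G.edgeSet] {C : E →ₗᵢ[ℝ] E}
    (hC : Function.Involutive C) {φ : G ≃g G} (hφ : Function.Involutive φ) {p : V → E}
    (hp : p ∈ symmetricConfigurations C.toLinearMap φ) {ω : Sym2 V → ℝ}
    (hω : ∀ e ∈ G.edgeSet, ω (e.map φ) = ω e)
    (hann : ∀ u ∈ symmetricConfigurations C.toLinearMap φ,
      ∑ e : G.edgeSet, ω e * edgeForm e.1 p u = 0) (w : V → E) :
    ∑ e : G.edgeSet, ω e * edgeForm e.1 p w = 0 := by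
  -- Both summands of the symmetric velocity `w + C ∘ w ∘ φ` pair equally with `ω`.
  let w' : V → E := C ∘ w ∘ φ
  have hw' : w' ∘ φ = C ∘ w := by ext1 i; simp [w', hφ i]
  have hpφ : p ∘ φ = C ∘ p := (funext (mem_symmetricConfigurations.1 hp)).symm
  have hsymm : w + w' ∈ symmetricConfigurations C.toLinearMap φ := by
    refine mem_symmetricConfigurations.2 fun i => ?_
    simp [w', hφ i, hC _, add_comm]
  have hpair : ∑ e : G.edgeSet, ω e * edgeForm e.1 p w =
      ∑ e : G.edgeSet, ω e * edgeForm e.1 p w' := by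
    rw [← Equiv.sum_comp φ.mapEdgeSet fun e => ω e * edgeForm e.1 p w']
    refine Finset.sum_congr rfl fun e _ => ?_
    change _ = ω (e.1.map φ) * edgeForm (e.1.map φ) p w'
    rw [hω e.1 e.2, edgeForm_map, hpφ, hw', edgeForm_isometry_comp]
  have hsum := hann _ hsymm
  simp only [map_add, mul_add, Finset.sum_add_distrib] at hsum
  linarith

theorem range_symmetricRigidityForm_eq_top [Finite G.edgeSet] [G.LocallyFinite]
    {C : E →ₗᵢ[ℝ] E} (hC : Function.Involutive C) {φ : G ≃g G} (hφ : Function.Involutive φ)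
    (p : symmetricConfigurations C.toLinearMap φ)
    (hstress : ∀ ω, IsSelfStress G p.1 ω → (∀ e ∈ G.edgeSet, ω (e.map φ) = ω e) →
      ∀ e ∈ G.edgeSet, ω e = 0) :
    LinearMap.range (symmetricRigidityForm C φ p) = ⊤ := by
  cases nonempty_fintype G.edgeSet
  rw [← Submodule.orthogonal_eq_bot_iff, Submodule.eq_bot_iff]
  rintro ⟨ω, hω⟩ horth
  let ω' : Sym2 V → ℝ := Function.extend Subtype.val ω 0
  have hω' (e : G.edgeSet) : ω' e = ω e := Subtype.val_injective.extend_apply ω 0 e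
  have hsymm : ∀ e ∈ G.edgeSet, ω' (e.map φ) = ω' e := fun e he => by
    rw [hω' ⟨e, he⟩, mem_symmetricEdgeFunctions.1 hω, ← hω']
    rfl
  have hann : ∀ u ∈ symmetricConfigurations C.toLinearMap φ,
      ∑ e : G.edgeSet, ω' e * edgeForm e.1 p.1 u = 0 := fun u hu => by
    have := (Submodule.mem_orthogonal _ _).1 horth _ (LinearMap.mem_range_self _ ⟨u, hu⟩)
    simpa [Submodule.coe_inner, PiLp.inner_apply, hω'] using this
  have hstress' : IsSelfStress G p.1 ω' := isSelfStress_of_sum_edgeForm_eq_zero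
    (sum_edgeForm_eq_zero_of_symmetric hC hφ p.2 hsymm hann)
  ext e
  rw [← hω']
  exact hstress ω' hstress' hsymm e.1 e.2

theorem exists_symmetric_nontrivial_motion [Finite V] [FiniteDimensional ℝ E]
    {C : E →ₗᵢ[ℝ] E} {φ : G ≃g G} (p : symmetricConfigurations C.toLinearMap φ)
    (hspan : affineSpan ℝ (Set.range p.1) = ⊤)
    (hdim : finrank ℝ (symmetricEdgeFunctions φ) +
        finrank ℝ (symmetricTrivialMotions C.toLinearMap p.1) <
      finrank ℝ (symmetricConfigurations C.toLinearMap φ)) :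
    ∃ u, symmetricRigidityForm C φ p u = 0 ∧ ∃ k l, edgeForm s(k, l) p.1 u.1 ≠ 0 := by
  by_contra! htrivial
  let R := symmetricRigidityForm C φ p
  have hle : (LinearMap.ker R).map (Submodule.subtype _) ≤
      symmetricTrivialMotions C.toLinearMap p.1 := by
    rintro _ ⟨u, hu, rfl⟩
    exact mem_symmetricTrivialMotions_of_inner_eq_zero p.2 hspan u.2 (htrivial u hu)
  have hker := Submodule.finrank_mono hle
  rw [Submodule.finrank_map_subtype_eq] at hker
  have hrange := (LinearMap.range R).finrank_le
  have := R.finrank_range_add_finrank_ker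
  omega

/-- The framework `(G, p)` has a finite flex along which it stays symmetric under `(C, σ)`. -/
def HasSymmetricFlex (G : SimpleGraph V) (C : E → E) (σ : V → V) (p : V → E) : Prop :=
  ∃ P : ℝ → V → E, ContinuousOn P (Set.Icc 0 1) ∧ P 0 = p ∧
    (∀ t ∈ Set.Icc (0 : ℝ) 1, ∀ i j, G.Adj i j → ‖P t i - P t j‖ = ‖p i - p j‖) ∧
    (∃ k l, ∀ t ∈ Set.Ioc (0 : ℝ) 1, ‖P t k - P t l‖ ≠ ‖p k - p l‖) ∧
    ∀ t ∈ Set.Icc (0 : ℝ) 1, ∀ i, C (P t i) = P t (σ i)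

theorem hasSymmetricFlex_of_motion [Finite V] [FiniteDimensional ℝ E]
    {C : E →ₗᵢ[ℝ] E} {φ : G ≃g G} {p u : symmetricConfigurations C.toLinearMap φ}
    (hsurj : LinearMap.range (symmetricRigidityForm C φ p) = ⊤)
    (hu : symmetricRigidityForm C φ p u = 0) {k l : V} (hkl : edgeForm s(k, l) p.1 u.1 ≠ 0) :
    HasSymmetricFlex G C φ p.1 := by
  cases nonempty_fintype V
  let b := (edgeForm s(k, l)).domRestrict₁₂ (symmetricConfigurations C.toLinearMap φ)
    (symmetricConfigurations C.toLinearMap φ)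
  obtain ⟨γ, hγ, hγ0, hγfiber, hγne⟩ := exists_bilin_self_fiber_path (symmetricRigidityForm C φ)
    symmetricRigidityForm_comm b (fun q w => edgeForm_comm s(k, l) q.1 w.1) hsurj hu hkl
  refine ⟨fun t => (γ t).1, continuous_subtype_val.comp_continuousOn hγ, congrArg Subtype.val hγ0,
    fun t ht i j hij => ?_, ⟨k, l, fun t ht => ?_⟩,
    fun t _ => mem_symmetricConfigurations.1 (γ t).2⟩
  · have hedge := congrArg (fun ω => ω.1 ⟨s(i, j), hij⟩) (hγfiber t ht)
    exact (edgeForm_mk_self_eq_iff i j _ _).1 hedge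
  · exact fun h => hγne t ht ((edgeForm_mk_self_eq_iff k l _ _).2 h)

/-- `hcount` says, with all dimensions doubled, that the symmetric configurations have larger
dimension than the symmetric edge functions and the symmetric infinitesimal isometries together. -/
theorem stmt_8_general [Fintype V] [FiniteDimensional ℝ E] [G.LocallyFinite] [Fintype G.edgeSet]
    {m n b : ℕ} (C : E →ₗᵢ[ℝ] E) (hC : Function.Involutive C)
    (hm : finrank ℝ C.toLinearMap.fixedSubmodule = m) (hn : finrank ℝ E = m + n)
    (φ : G ≃g G) (hφ : Function.Involutive φ) (hb : {e ∈ G.edgeSet | e.map φ = e}.ncard = b)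
    (hcount : (G.edgeFinset.card + b + 2 * (m.choose 2 + n.choose 2 + m) : ℤ) <
      (m + n) * Fintype.card V + (m - n) * (Function.fixedPoints φ).ncard)
    (p : V → E) (hsymm : ∀ i, C (p i) = p (φ i)) (hspan : affineSpan ℝ (Set.range p) = ⊤)
    (hstress : ∀ ω, IsSelfStress G p ω → (∀ e ∈ G.edgeSet, ω (e.map φ) = ω e) →
      ∀ e ∈ G.edgeSet, ω e = 0) :
    HasSymmetricFlex G C φ p := by
  let p' : symmetricConfigurations C.toLinearMap φ := ⟨p, mem_symmetricConfigurations.2 hsymm⟩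
  have hn' : finrank ℝ C.toLinearMap.fixedSubmoduleᗮ = n := by
    have := C.toLinearMap.fixedSubmodule.finrank_add_finrank_orthogonal
    omega
  have hedges := two_mul_finrank_symmetricEdgeFunctions hφ
  have htrivial := finrank_symmetricTrivialMotions_le C.toLinearMap p
  have hconfig : (2 * finrank ℝ (symmetricConfigurations C.toLinearMap φ) : ℤ) =
      (m + n) * Fintype.card V + (m - n) * (Function.fixedPoints φ).ncard := by
    have := two_mul_finrank_symmetricConfigurations (C := C.toLinearMap) hC hφ
    rw [trace_eq_finrank_sub_of_involutive (C := C.toLinearMap) hC, hm, hn', hn] at this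
    rw [mul_comm (m - n : ℤ)]
    exact_mod_cast this
  rw [hb] at hedges
  rw [hm, hn'] at htrivial
  obtain ⟨u, hu, k, l, hkl⟩ := exists_symmetric_nontrivial_motion p' hspan (by zify at *; linarith)
  exact hasSymmetricFlex_of_motion (range_symmetricRigidityForm_eq_top hC hφ p' hstress) hu hkl

end Framework

/-- Theorem 6.8(i), half-turn symmetry in dimension 4: `C ∈ O(4)`
a half-turn (orthogonal involution with 2-dimensional fixed subspace),
`S = {I, C}`, `Φ(C) = σ` fixes no edge setwise (`b_C = 0`),
`|E| = 4|V| - 10`; then a symmetric framework spanning `ℝ⁴` with no nonzero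
fully symmetric self-stress has a symmetry-preserving finite flex. -/
theorem stmt_8 {V : Type*} [Fintype V] [DecidableEq V]
    (G : SimpleGraph V) [DecidableRel G.Adj]
    (hcount : G.edgeFinset.card + 10 = 4 * Fintype.card V)
    (C : Euc 4 ≃ₗᵢ[ℝ] Euc 4) (hC2 : ∀ v, C (C v) = v)
    (hhalf : Module.finrank ℝ (fixedSpace C) = 2)
    (σ : Equiv.Perm V) (hσ2 : σ * σ = 1)
    (hσadj : ∀ i j : V, G.Adj (σ i) (σ j) ↔ G.Adj i j)
    (hnofixe : ∀ e ∈ G.edgeSet, Sym2.map σ e ≠ e)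
    (p : V → Euc 4) (hp : Function.Injective p)
    (hsym : ∀ i, C (p i) = p (σ i))
    (hspan : affineSpan ℝ (Set.range p) = ⊤)
    (hnostress : ∀ ω : Sym2 V → ℝ,
      (∀ i : V, ∑ j ∈ G.neighborFinset i, ω s(i, j) • (p i - p j) = 0) →
      (∀ e ∈ G.edgeSet, ω (Sym2.map σ e) = ω e) →
      ∀ e ∈ G.edgeSet, ω e = 0) :
    ∃ P : ℝ → V → Euc 4,
      ContinuousOn P (Set.Icc 0 1) ∧
      P 0 = p ∧
      (∀ t ∈ Set.Icc (0:ℝ) 1, ∀ i j : V, G.Adj i j → ‖P t i - P t j‖ = ‖p i - p j‖) ∧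
      (∃ k l : V, ∀ t ∈ Set.Ioc (0:ℝ) 1, ‖P t k - P t l‖ ≠ ‖p k - p l‖) ∧
      (∀ t ∈ Set.Icc (0:ℝ) 1, ∀ i, C (P t i) = P t (σ i)) := by
  have hfixedEdges : {e ∈ G.edgeSet | e.map σ = e} = ∅ :=
    Set.eq_empty_of_forall_notMem fun e he => hnofixe e he.1 he.2
  exact stmt_8_general (n := 2) (b := 0) C.toLinearIsometry hC2
    (by rw [LinearMap.fixedSubmodule_eq_ker]; exact hhalf) finrank_euclideanSpace_fin
    ⟨σ, hσadj _ _⟩ (Equiv.congr_fun hσ2) (hfixedEdges ▸ Set.ncard_empty _)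
    (by norm_num; omega) p hsym hspan hnostress
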